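/- Assume ‖x_t‖² ≤ X² and |y_t| ≤ Y for all t. Then for every T ≥ 1 and every comparator sequence u_1, …, u_T ∈ ℝ^d, L_T(LASER) ≤ b‖u_1‖² + L_T({u_t}) + Y²·ln det((1/b)·D_T) + c^{-1}·Y²·Tr(D_0) + c·V + c^{-1}·Y²·T·d·max{ (3X² + √(X⁴ + 4X²c))/2, b + X² }, where V = Σ_{t=1}^{T-1} ‖u_{t+1} − u_t‖² and L_T({u_t}) = Σ_{t=1}^{T} (y_t − u_tᵀ x_t)². -/

import Mathlib

open Matrix Finset

/-- `D₀ = (bc/(c−b)) I`, `D_t = (D_{t-1}⁻¹ + c⁻¹ I)⁻¹ + x_t x_tᵀ` for `t ≥ 1`. -/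
noncomputable def Dmat (d : ℕ) (b c : ℝ) (x : ℕ → Fin d → ℝ) :
    ℕ → Matrix (Fin d) (Fin d) ℝ
  | 0 => (b * c / (c - b)) • 1
  | (t + 1) => ((Dmat d b c x t)⁻¹ + c⁻¹ • 1)⁻¹ + vecMulVec (x (t + 1)) (x (t + 1))

/-- `e₀ = 0`, `e_t = (I + c⁻¹ D_{t-1})⁻¹ e_{t-1} + y_t x_t` for `t ≥ 1`. -/
noncomputable def evec (d : ℕ) (b c : ℝ) (x : ℕ → Fin d → ℝ) (y : ℕ → ℝ) :
    ℕ → Fin d → ℝ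
  | 0 => 0
  | (t + 1) => (1 + c⁻¹ • Dmat d b c x t)⁻¹ *ᵥ evec d b c x y t + y (t + 1) • x (t + 1)

/-- LASER prediction at round `t + 1`:
`ŷ_{t+1} = x_{t+1}ᵀ D_{t+1}⁻¹ (I + c⁻¹ D_t)⁻¹ e_t`. -/
noncomputable def laserPred (d : ℕ) (b c : ℝ) (x : ℕ → Fin d → ℝ) (y : ℕ → ℝ)
    (t : ℕ) : ℝ :=
  x (t + 1) ⬝ᵥ ((Dmat d b c x (t + 1))⁻¹ *ᵥ
    ((1 + c⁻¹ • Dmat d b c x t)⁻¹ *ᵥ evec d b c x y t))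

/-- Cumulative squared loss of LASER over `T` rounds. -/
noncomputable def laserLoss (d : ℕ) (b c : ℝ) (x : ℕ → Fin d → ℝ) (y : ℕ → ℝ)
    (T : ℕ) : ℝ :=
  ∑ t ∈ Finset.range T, (y (t + 1) - laserPred d b c x y t) ^ 2

/-!
Let `θ_t = D_t⁻¹ e_t` and let `A_t = (D_{t-1}⁻¹ + c⁻¹ I)⁻¹`, so that `D_t = A_t + x_t x_tᵀ`.
Two facts drive the proof.

* `vᵀ A_t v` is the infimum over `w` of `wᵀ D_{t-1} w + c ‖v - w‖²`, so moving the comparator from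
  `u_{t-1}` to `u_t` costs at most `c ‖u_t - u_{t-1}‖²`; the choice of `D_0` makes `A_1 = b I`.
* With `s_t = x_tᵀ D_t⁻¹ x_t`, adding the round's loss `(y_t - vᵀ x_t)²` to
  `(v - θ_{t-1})ᵀ A_t (v - θ_{t-1})` and completing the square gives
  `(v - θ_t)ᵀ D_t (v - θ_t) + (1 - s_t) (y_t - x_tᵀ θ_{t-1})²`.

Hence `∑ (1 - s_t) (y_t - x_tᵀ θ_{t-1})²` is at most `b ‖u_1‖²` plus the comparator's loss and drift
cost. Since LASER predicts `(1 - s_t) x_tᵀ θ_{t-1}`, its loss in round `t` exceeds the corresponding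
term by at most `s_t y_t²`. Finally `1 - s_t = det A_t / det D_t` bounds `s_t` by
`log det D_t - log det A_t`, which telescopes up to the traces `c⁻¹ Tr D_{t-1}`.
-/

section RankOneUpdate

variable {n R : Type*} [Fintype n] [CommRing R] {A : Matrix n n R} {x : n → R}

theorem dotProduct_mulVec_comm_of_isSymm (hA : A.IsSymm) (v w : n → R) :
    v ⬝ᵥ A *ᵥ w = w ⬝ᵥ A *ᵥ v := by
  rw [← dotProduct_transpose_mulVec, hA.eq]

theorem add_vecMulVec_self_mulVec (A : Matrix n n R) (x v : n → R) :
    (A + vecMulVec x x) *ᵥ v = A *ᵥ v + (x ⬝ᵥ v) • x := by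
  rw [add_mulVec, vecMulVec_mulVec, op_smul_eq_smul]

theorem form_add_vecMulVec_self (A : Matrix n n R) (x v : n → R) :
    v ⬝ᵥ (A + vecMulVec x x) *ᵥ v = v ⬝ᵥ A *ᵥ v + (x ⬝ᵥ v) ^ 2 := by
  rw [add_vecMulVec_self_mulVec, dotProduct_add, dotProduct_smul, smul_eq_mul,
    dotProduct_comm v x, sq]

variable [DecidableEq n]

/-- The leverage `xᵀ B⁻¹ x` of the input `x` with respect to the regularized Gram matrix `B`. -/
noncomputable def leverage (B : Matrix n n R) (x : n → R) : R :=
  x ⬝ᵥ B⁻¹ *ᵥ x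

theorem mulVec_inv_mulVec_cancel (hA : IsUnit A.det) (v : n → R) : A *ᵥ A⁻¹ *ᵥ v = v := by
  rw [mulVec_mulVec, mul_nonsing_inv _ hA, one_mulVec]

theorem inv_mulVec_mulVec_cancel (hA : IsUnit A.det) (v : n → R) : A⁻¹ *ᵥ A *ᵥ v = v := by
  rw [mulVec_mulVec, nonsing_inv_mul _ hA, one_mulVec]

theorem det_eq_det_add_vecMulVec_self_mul_one_sub_leverage
    (hB : IsUnit (A + vecMulVec x x).det) :
    A.det = (A + vecMulVec x x).det * (1 - leverage (A + vecMulVec x x) x) := by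
  have h := det_add_replicateCol_mul_replicateRow (ι := Unit) hB (-x) x
  rwa [← vecMulVec_eq, neg_vecMulVec, add_neg_cancel_right, Matrix.mul_assoc,
    ← replicateCol_mulVec, det_unique (1 + _), Matrix.add_apply, one_apply_eq,
    replicateRow_mul_replicateCol_apply, mulVec_neg, dotProduct_neg, ← sub_eq_add_neg] at h

theorem inv_add_vecMulVec_self_mulVec_add_smul (hB : IsUnit (A + vecMulVec x x).det)
    (θ : n → R) (y : R) :
    (A + vecMulVec x x)⁻¹ *ᵥ (A *ᵥ θ + y • x) =
      θ + (y - x ⬝ᵥ θ) • (A + vecMulVec x x)⁻¹ *ᵥ x := by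
  have h : A *ᵥ θ + y • x = (A + vecMulVec x x) *ᵥ θ + (y - x ⬝ᵥ θ) • x := by
    rw [add_vecMulVec_self_mulVec]
    module
  rw [h, mulVec_add, inv_mulVec_mulVec_cancel hB, mulVec_smul]

theorem form_sub_smul_inv_mulVec (hA : A.IsSymm) (hdet : IsUnit A.det) (w x : n → R) (r : R) :
    (w - r • A⁻¹ *ᵥ x) ⬝ᵥ A *ᵥ (w - r • A⁻¹ *ᵥ x) =
      w ⬝ᵥ A *ᵥ w - 2 * r * (x ⬝ᵥ w) + r ^ 2 * leverage A x := by
  have hcross : (A⁻¹ *ᵥ x) ⬝ᵥ A *ᵥ w = x ⬝ᵥ w := by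
    rw [dotProduct_mulVec_comm_of_isSymm hA, mulVec_inv_mulVec_cancel hdet, dotProduct_comm]
  simp only [mulVec_sub, mulVec_smul, mulVec_inv_mulVec_cancel hdet, dotProduct_sub,
    sub_dotProduct, dotProduct_smul, smul_dotProduct, smul_eq_mul, hcross, dotProduct_comm w x,
    dotProduct_comm (A⁻¹ *ᵥ x) x, leverage]
  ring

theorem form_recentred_add_discounted_sq (hA : A.IsSymm) (hB : IsUnit (A + vecMulVec x x).det)
    (v θ : n → R) (y : R) :
    (v - (θ + (y - x ⬝ᵥ θ) • (A + vecMulVec x x)⁻¹ *ᵥ x)) ⬝ᵥ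
        (A + vecMulVec x x) *ᵥ (v - (θ + (y - x ⬝ᵥ θ) • (A + vecMulVec x x)⁻¹ *ᵥ x))
      + (1 - leverage (A + vecMulVec x x) x) * (y - x ⬝ᵥ θ) ^ 2 =
      (v - θ) ⬝ᵥ A *ᵥ (v - θ) + (y - v ⬝ᵥ x) ^ 2 := by
  have hBsymm : (A + vecMulVec x x).IsSymm := hA.add (transpose_vecMulVec x x)
  rw [← sub_sub, form_sub_smul_inv_mulVec hBsymm hB, form_add_vecMulVec_self, dotProduct_sub,
    dotProduct_comm v x]
  ring

end RankOneUpdate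

section PositiveDefiniteUpdate

variable {n : Type*} {A : Matrix n n ℝ}

theorem posDef_add_vecMulVec_self [Finite n] (hA : A.PosDef) (x : n → ℝ) :
    (A + vecMulVec x x).PosDef := by
  simpa only [star_trivial] using hA.add_posSemidef (posSemidef_vecMulVec_self_star x)

variable [Fintype n]

theorem form_nonneg_of_posSemidef (hA : A.PosSemidef) (v : n → ℝ) : 0 ≤ v ⬝ᵥ A *ᵥ v := by
  simpa only [star_trivial] using hA.dotProduct_mulVec_nonneg v

variable [DecidableEq n]

theorem leverage_nonneg (hA : A.PosDef) (x : n → ℝ) : 0 ≤ leverage A x :=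
  form_nonneg_of_posSemidef hA.inv.posSemidef x

theorem leverage_add_vecMulVec_self_lt_one (hA : A.PosDef) (x : n → ℝ) :
    leverage (A + vecMulVec x x) x < 1 := by
  have hB := (posDef_add_vecMulVec_self hA x).det_pos
  have hdet := hA.det_pos
  rw [det_eq_det_add_vecMulVec_self_mul_one_sub_leverage hB.ne'.isUnit] at hdet
  exact sub_pos.1 (pos_of_mul_pos_right hdet hB.le)

theorem leverage_add_vecMulVec_self_le_log_det_sub (hA : A.PosDef) (x : n → ℝ) :
    leverage (A + vecMulVec x x) x ≤
      Real.log (A + vecMulVec x x).det - Real.log A.det := by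
  have hB := (posDef_add_vecMulVec_self hA x).det_pos
  have hlev := sub_pos.2 (leverage_add_vecMulVec_self_lt_one hA x)
  rw [det_eq_det_add_vecMulVec_self_mul_one_sub_leverage hB.ne'.isUnit,
    Real.log_mul hB.ne' hlev.ne']
  linarith [Real.log_le_sub_one_of_pos hlev]

end PositiveDefiniteUpdate

section ParallelSum

variable {n : Type*} [Fintype n]

theorem trace_le_card_mul_of_form_le {D : Matrix n n ℝ} {M : ℝ}
    (h : ∀ v, v ⬝ᵥ D *ᵥ v ≤ M * (v ⬝ᵥ v)) : D.trace ≤ Fintype.card n * M := by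
  classical
  have hdiag : ∀ i, D i i ≤ M := fun i => by simpa using h (Pi.single i 1)
  simpa [trace] using Finset.sum_le_card_nsmul Finset.univ _ M fun i _ => hdiag i

variable [DecidableEq n]

/-- The parallel sum `(A⁻¹ + B⁻¹)⁻¹`. For real positive definite matrices it is the matrix of the
infimal convolution of the two quadratic forms. -/
noncomputable def parallelSum {R : Type*} [CommRing R] (A B : Matrix n n R) : Matrix n n R :=
  (A⁻¹ + B⁻¹)⁻¹

section Field

variable {K : Type*} [Field K] {a c : K}

theorem inv_smul_one (hc : c ≠ 0) : (c • (1 : Matrix n n K))⁻¹ = c⁻¹ • 1 := by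
  apply inv_eq_right_inv
  rw [smul_mul_smul_comm, mul_inv_cancel₀ hc, one_smul, mul_one]

theorem parallelSum_smul_one_smul_one (ha : a ≠ 0) (hc : c ≠ 0) (hac : a⁻¹ + c⁻¹ ≠ 0) :
    parallelSum (a • (1 : Matrix n n K)) (c • 1) = (a⁻¹ + c⁻¹)⁻¹ • 1 := by
  rw [parallelSum, inv_smul_one ha, inv_smul_one hc, ← add_smul, inv_smul_one hac]

theorem inv_one_add_inv_smul {D : Matrix n n K} (hD : IsUnit D.det) (hc : c ≠ 0) :
    (1 + c⁻¹ • D)⁻¹ = parallelSum D (c • 1) * D⁻¹ := by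
  have h : 1 + c⁻¹ • D = D * (D⁻¹ + c⁻¹ • 1) := by
    rw [mul_add, mul_nonsing_inv _ hD, mul_smul_comm, mul_one]
  rw [h, Matrix.mul_inv_rev, parallelSum, inv_smul_one hc]

end Field

variable {A B D : Matrix n n ℝ} {c : ℝ}

theorem parallelSum_posDef (hA : A.PosDef) (hB : B.PosDef) : (parallelSum A B).PosDef :=
  (hA.inv.add hB.inv).inv

theorem two_mul_dotProduct_le_form_add_form_inv (hA : A.PosDef) (w z : n → ℝ) :
    2 * (w ⬝ᵥ z) ≤ w ⬝ᵥ A *ᵥ w + z ⬝ᵥ A⁻¹ *ᵥ z := by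
  have hsq := form_nonneg_of_posSemidef hA.posSemidef (w - (1 : ℝ) • A⁻¹ *ᵥ z)
  rw [form_sub_smul_inv_mulVec (isHermitian_iff_isSymm.1 hA.isHermitian) hA.det_pos.ne'.isUnit,
    leverage, dotProduct_comm z w] at hsq
  linarith

theorem parallelSum_form_le (hA : A.PosDef) (hB : B.PosDef) (v w : n → ℝ) :
    v ⬝ᵥ parallelSum A B *ᵥ v ≤ w ⬝ᵥ A *ᵥ w + (v - w) ⬝ᵥ B *ᵥ (v - w) := by
  set z := parallelSum A B *ᵥ v with hz
  have hv : A⁻¹ *ᵥ z + B⁻¹ *ᵥ z = v := by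
    rw [← add_mulVec, hz, parallelSum,
      mulVec_inv_mulVec_cancel (hA.inv.add hB.inv).det_pos.ne'.isUnit]
  have hvz : z ⬝ᵥ A⁻¹ *ᵥ z + z ⬝ᵥ B⁻¹ *ᵥ z = v ⬝ᵥ z := by
    rw [← dotProduct_add, hv, dotProduct_comm]
  have hyoungA := two_mul_dotProduct_le_form_add_form_inv hA w z
  have hyoungB := two_mul_dotProduct_le_form_add_form_inv hB (v - w) z
  rw [sub_dotProduct] at hyoungB
  linarith

theorem parallelSum_smul_one_form_le (hD : D.PosDef) (hc : 0 < c) {M : ℝ} (hM : 0 < M)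
    {v : n → ℝ} (hv : v ⬝ᵥ D *ᵥ v ≤ M * (v ⬝ᵥ v)) :
    v ⬝ᵥ parallelSum D (c • 1) *ᵥ v ≤ c * M / (c + M) * (v ⬝ᵥ v) := by
  -- `k • v` minimizes `M ‖w‖² + c ‖v - w‖²` over `w`.
  set k := c / (c + M) with hk
  calc v ⬝ᵥ parallelSum D (c • 1) *ᵥ v
      ≤ (k • v) ⬝ᵥ D *ᵥ (k • v) + (v - k • v) ⬝ᵥ (c • 1 : Matrix n n ℝ) *ᵥ (v - k • v) :=
        parallelSum_form_le hD (PosDef.one.smul hc) v (k • v)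
    _ = k ^ 2 * (v ⬝ᵥ D *ᵥ v) + c * (1 - k) ^ 2 * (v ⬝ᵥ v) := by
        simp only [smul_mulVec, one_mulVec, mulVec_smul, dotProduct_smul, smul_dotProduct,
          dotProduct_sub, sub_dotProduct, smul_eq_mul]
        ring
    _ ≤ k ^ 2 * (M * (v ⬝ᵥ v)) + c * (1 - k) ^ 2 * (v ⬝ᵥ v) := by gcongr
    _ = c * M / (c + M) * (v ⬝ᵥ v) := by
        rw [hk]
        field_simp
        ring

theorem log_det_le_trace_sub_card (hA : A.PosDef) :
    Real.log A.det ≤ A.trace - Fintype.card n := by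
  have hpos := hA.eigenvalues_pos
  calc Real.log A.det = ∑ i, Real.log (hA.isHermitian.eigenvalues i) := by
        rw [hA.isHermitian.det_eq_prod_eigenvalues]
        exact Real.log_prod fun i _ => (hpos i).ne'
    _ ≤ ∑ i, (hA.isHermitian.eigenvalues i - 1) :=
        Finset.sum_le_sum fun i _ => Real.log_le_sub_one_of_pos (hpos i)
    _ = A.trace - Fintype.card n := by
        simp [hA.isHermitian.trace_eq_sum_eigenvalues]

theorem log_det_sub_trace_le_log_det_parallelSum (hD : D.PosDef) (hc : 0 < c) :
    Real.log D.det - c⁻¹ * D.trace ≤ Real.log (parallelSum D (c • 1)).det := by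
  have hP : (1 + c⁻¹ • D).PosDef := PosDef.one.add (hD.smul (inv_pos.2 hc))
  have hlog : Real.log (1 + c⁻¹ • D).det =
      Real.log D.det - Real.log (parallelSum D (c • 1)).det := by
    have hS := (parallelSum_posDef hD (PosDef.one.smul hc)).det_pos.ne'
    have hdet := congrArg det (inv_one_add_inv_smul hD.det_pos.ne'.isUnit hc.ne')
    rw [det_mul, det_nonsing_inv, det_nonsing_inv, Ring.inverse_eq_inv'] at hdet
    rw [← inv_inv (1 + c⁻¹ • D).det, hdet, Real.log_inv,
      Real.log_mul hS (inv_ne_zero hD.det_pos.ne'), Real.log_inv]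
    ring
  have htrace := log_det_le_trace_sub_card hP
  rw [trace_add, trace_one, trace_smul, smul_eq_mul, hlog] at htrace
  linarith

end ParallelSum

theorem discounted_prediction_loss_le {s : ℝ} (hs₀ : 0 ≤ s) (hs₁ : s ≤ 1) (y p : ℝ) :
    (y - (1 - s) * p) ^ 2 ≤ (1 - s) * (y - p) ^ 2 + s * y ^ 2 := by
  nlinarith [mul_nonneg (mul_nonneg hs₀ (sub_nonneg.2 hs₁)) (sq_nonneg p)]

-- The left side of the hypothesis is the positive fixed point of `M ↦ c M / (c + M) + s`.
theorem mul_div_add_add_le_of_le {c s M : ℝ} (hc : 0 < c) (hs : 0 ≤ s)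
    (hM : (s + √(s ^ 2 + 4 * s * c)) / 2 ≤ M) : c * M / (c + M) + s ≤ M := by
  have hM₀ : 0 ≤ M := le_trans (by positivity) hM
  have hroot : √(s ^ 2 + 4 * s * c) ≤ 2 * M - s := by linarith
  have hquad : s ^ 2 + 4 * s * c ≤ (2 * M - s) ^ 2 := (Real.sqrt_le_iff.1 hroot).2
  rw [← le_sub_iff_add_le, div_le_iff₀ (by positivity)]
  linarith

section Laser

variable {d : ℕ} {b c : ℝ} {x : ℕ → Fin d → ℝ}

theorem Dmat_succ (hc : c ≠ 0) (t : ℕ) :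
    Dmat d b c x (t + 1) =
      parallelSum (Dmat d b c x t) (c • 1) + vecMulVec (x (t + 1)) (x (t + 1)) := by
  rw [Dmat, parallelSum, inv_smul_one hc]

theorem Dmat_zero_scalar_pos (hb : 0 < b) (hbc : b < c) : 0 < b * c / (c - b) :=
  div_pos (mul_pos hb (hb.trans hbc)) (sub_pos.2 hbc)

theorem Dmat_posDef (hb : 0 < b) (hbc : b < c) (t : ℕ) : (Dmat d b c x t).PosDef := by
  have hc := hb.trans hbc
  induction t with
  | zero => exact PosDef.one.smul (Dmat_zero_scalar_pos hb hbc)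
  | succ t ih =>
    rw [Dmat_succ hc.ne']
    exact posDef_add_vecMulVec_self (parallelSum_posDef ih (PosDef.one.smul hc)) _

theorem parallelSum_Dmat_posDef (hb : 0 < b) (hbc : b < c) (t : ℕ) :
    (parallelSum (Dmat d b c x t) (c • 1)).PosDef :=
  parallelSum_posDef (Dmat_posDef hb hbc t) (PosDef.one.smul (hb.trans hbc))

theorem parallelSum_Dmat_zero (hb : 0 < b) (hbc : b < c) :
    parallelSum (Dmat d b c x 0) (c • 1) = b • 1 := by
  have hc := hb.trans hbc
  have hscalar : (b * c / (c - b))⁻¹ + c⁻¹ = b⁻¹ := by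
    field_simp
    ring
  rw [Dmat, parallelSum_smul_one_smul_one (Dmat_zero_scalar_pos hb hbc).ne' hc.ne'
    (hscalar ▸ inv_ne_zero hb.ne'), hscalar, inv_inv]

theorem leverage_Dmat_succ_le (hb : 0 < b) (hbc : b < c) (t : ℕ) :
    leverage (Dmat d b c x (t + 1)) (x (t + 1)) ≤
      Real.log (Dmat d b c x (t + 1)).det - Real.log (Dmat d b c x t).det
        + c⁻¹ * (Dmat d b c x t).trace := by
  have hc := hb.trans hbc
  have hlev := leverage_add_vecMulVec_self_le_log_det_sub
    (parallelSum_Dmat_posDef (x := x) hb hbc t) (x (t + 1))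
  rw [← Dmat_succ hc.ne'] at hlev
  linarith [log_det_sub_trace_le_log_det_parallelSum (Dmat_posDef (x := x) hb hbc t) hc]

theorem log_det_sub_log_det_Dmat_zero_le (hb : 0 < b) (hbc : b < c) (t : ℕ) :
    Real.log (Dmat d b c x t).det - Real.log (Dmat d b c x 0).det ≤
      Real.log (b⁻¹ • Dmat d b c x t).det := by
  have hscalar : b ≤ b * c / (c - b) := by
    rw [le_div_iff₀ (sub_pos.2 hbc)]
    nlinarith
  have hlog : d * Real.log b ≤ d * Real.log (b * c / (c - b)) := by gcongr
  rw [det_smul, Real.log_mul (by positivity) (Dmat_posDef hb hbc t).det_pos.ne', Dmat, det_smul,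
    det_one, mul_one, Real.log_pow, Real.log_pow, Real.log_inv, Fintype.card_fin]
  linarith

theorem sum_leverage_Dmat_le (hb : 0 < b) (hbc : b < c) (T : ℕ) :
    ∑ t ∈ range T, leverage (Dmat d b c x (t + 1)) (x (t + 1)) ≤
      Real.log (b⁻¹ • Dmat d b c x T).det + c⁻¹ * ∑ t ∈ range T, (Dmat d b c x t).trace := by
  have hsum := Finset.sum_le_sum fun t (_ : t ∈ range T) =>
    leverage_Dmat_succ_le (d := d) (x := x) hb hbc t
  rw [Finset.sum_add_distrib, Finset.sum_range_sub (fun t => Real.log (Dmat d b c x t).det),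
    ← Finset.mul_sum] at hsum
  linarith [log_det_sub_log_det_Dmat_zero_le (x := x) hb hbc T]

theorem Dmat_succ_form_le (hb : 0 < b) (hbc : b < c) {X M : ℝ}
    (hx : ∀ t, x (t + 1) ⬝ᵥ x (t + 1) ≤ X ^ 2) (hbM : b + X ^ 2 ≤ M)
    (hstep : c * M / (c + M) + X ^ 2 ≤ M) (t : ℕ) (v : Fin d → ℝ) :
    v ⬝ᵥ Dmat d b c x (t + 1) *ᵥ v ≤ M * (v ⬝ᵥ v) := by
  have hc := hb.trans hbc
  have hM : 0 < M := by linarith [sq_nonneg X]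
  have hv : 0 ≤ v ⬝ᵥ v := by simpa only [star_trivial] using dotProduct_self_star_nonneg v
  have hxv : (x (t + 1) ⬝ᵥ v) ^ 2 ≤ X ^ 2 * (v ⬝ᵥ v) :=
    calc (x (t + 1) ⬝ᵥ v) ^ 2 ≤ (x (t + 1) ⬝ᵥ x (t + 1)) * (v ⬝ᵥ v) := by
          simpa only [dotProduct, sq] using Finset.sum_mul_sq_le_sq_mul_sq univ (x (t + 1)) v
      _ ≤ X ^ 2 * (v ⬝ᵥ v) := by gcongr; exact hx t
  suffices hdrift : ∃ m, m + X ^ 2 ≤ M ∧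
      v ⬝ᵥ parallelSum (Dmat d b c x t) (c • 1) *ᵥ v ≤ m * (v ⬝ᵥ v) by
    obtain ⟨m, hmM, hm⟩ := hdrift
    rw [Dmat_succ hc.ne', form_add_vecMulVec_self]
    linarith [mul_le_mul_of_nonneg_right hmM hv]
  cases t with
  | zero =>
    refine ⟨b, hbM, ?_⟩
    simp [parallelSum_Dmat_zero hb hbc, smul_mulVec]
  | succ t =>
    exact ⟨_, hstep, parallelSum_smul_one_form_le (Dmat_posDef hb hbc _) hc hM
      (Dmat_succ_form_le hb hbc hx hbM hstep t v)⟩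

theorem sum_trace_Dmat_le {M : ℝ}
    (hform : ∀ t v, v ⬝ᵥ Dmat d b c x (t + 1) *ᵥ v ≤ M * (v ⬝ᵥ v)) (T : ℕ) :
    ∑ t ∈ range (T + 1), (Dmat d b c x t).trace ≤ (Dmat d b c x 0).trace + T * (d * M) := by
  have htrace : ∀ t ∈ range T, (Dmat d b c x (t + 1)).trace ≤ d * M := fun t _ => by
    simpa using trace_le_card_mul_of_form_le (hform t)
  have hsum := Finset.sum_le_card_nsmul _ _ _ htrace
  rw [Finset.card_range, nsmul_eq_mul] at hsum
  rw [Finset.sum_range_succ']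
  linarith

variable {y : ℕ → ℝ}

/-- The minimizer `θ_t = D_t⁻¹ e_t` of the quadratic `vᵀ D_t v - 2 vᵀ e_t` that LASER maintains
after `t` rounds. -/
noncomputable def laserCenter (d : ℕ) (b c : ℝ) (x : ℕ → Fin d → ℝ) (y : ℕ → ℝ) (t : ℕ) :
    Fin d → ℝ :=
  (Dmat d b c x t)⁻¹ *ᵥ evec d b c x y t

theorem drift_mulVec_evec (hb : 0 < b) (hbc : b < c) (t : ℕ) :
    (1 + c⁻¹ • Dmat d b c x t)⁻¹ *ᵥ evec d b c x y t =
      parallelSum (Dmat d b c x t) (c • 1) *ᵥ laserCenter d b c x y t := by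
  rw [inv_one_add_inv_smul (Dmat_posDef hb hbc t).det_pos.ne'.isUnit (hb.trans hbc).ne',
    laserCenter, mulVec_mulVec]

theorem laserCenter_succ (hb : 0 < b) (hbc : b < c) (t : ℕ) :
    laserCenter d b c x y (t + 1) =
      laserCenter d b c x y t + (y (t + 1) - x (t + 1) ⬝ᵥ laserCenter d b c x y t) •
        (Dmat d b c x (t + 1))⁻¹ *ᵥ x (t + 1) := by
  have hD := (Dmat_posDef (x := x) hb hbc (t + 1)).det_pos.ne'.isUnit
  rw [Dmat_succ (hb.trans hbc).ne'] at hD ⊢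
  rw [laserCenter, evec, drift_mulVec_evec hb hbc, Dmat_succ (hb.trans hbc).ne',
    inv_add_vecMulVec_self_mulVec_add_smul hD]

theorem laserPred_eq (hb : 0 < b) (hbc : b < c) (t : ℕ) :
    laserPred d b c x y t = (1 - leverage (Dmat d b c x (t + 1)) (x (t + 1))) *
      (x (t + 1) ⬝ᵥ laserCenter d b c x y t) := by
  have hD := (Dmat_posDef (x := x) hb hbc (t + 1)).det_pos.ne'.isUnit
  rw [Dmat_succ (hb.trans hbc).ne'] at hD
  have hupdate := inv_add_vecMulVec_self_mulVec_add_smul hD (laserCenter d b c x y t) 0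
  rw [zero_smul, add_zero, ← Dmat_succ (hb.trans hbc).ne'] at hupdate
  rw [laserPred, drift_mulVec_evec hb hbc, hupdate, dotProduct_add, dotProduct_smul, leverage,
    smul_eq_mul]
  ring

theorem laser_round_loss_le (hb : 0 < b) (hbc : b < c) (t : ℕ) :
    (y (t + 1) - laserPred d b c x y t) ^ 2 ≤
      (1 - leverage (Dmat d b c x (t + 1)) (x (t + 1))) *
          (y (t + 1) - x (t + 1) ⬝ᵥ laserCenter d b c x y t) ^ 2
        + leverage (Dmat d b c x (t + 1)) (x (t + 1)) * y (t + 1) ^ 2 := by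
  have hlev := leverage_add_vecMulVec_self_lt_one
    (parallelSum_Dmat_posDef (x := x) hb hbc t) (x (t + 1))
  rw [← Dmat_succ (hb.trans hbc).ne'] at hlev
  rw [laserPred_eq hb hbc]
  exact discounted_prediction_loss_le (leverage_nonneg (Dmat_posDef hb hbc _) _) hlev.le _ _

theorem laserCenter_form_succ (hb : 0 < b) (hbc : b < c) (t : ℕ) (v : Fin d → ℝ) :
    (v - laserCenter d b c x y (t + 1)) ⬝ᵥ
        Dmat d b c x (t + 1) *ᵥ (v - laserCenter d b c x y (t + 1))
      + (1 - leverage (Dmat d b c x (t + 1)) (x (t + 1))) *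
          (y (t + 1) - x (t + 1) ⬝ᵥ laserCenter d b c x y t) ^ 2 =
      (v - laserCenter d b c x y t) ⬝ᵥ
          parallelSum (Dmat d b c x t) (c • 1) *ᵥ (v - laserCenter d b c x y t)
        + (y (t + 1) - v ⬝ᵥ x (t + 1)) ^ 2 := by
  rw [laserCenter_succ hb hbc, Dmat_succ (hb.trans hbc).ne']
  have hA := parallelSum_Dmat_posDef (x := x) hb hbc t
  exact form_recentred_add_discounted_sq (isHermitian_iff_isSymm.1 hA.isHermitian)
    (posDef_add_vecMulVec_self hA _).det_pos.ne'.isUnit _ _ _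

theorem laserCenter_drift_form_le (hb : 0 < b) (hbc : b < c) (t : ℕ) (v w : Fin d → ℝ) :
    (v - laserCenter d b c x y t) ⬝ᵥ
        parallelSum (Dmat d b c x t) (c • 1) *ᵥ (v - laserCenter d b c x y t) ≤
      (w - laserCenter d b c x y t) ⬝ᵥ Dmat d b c x t *ᵥ (w - laserCenter d b c x y t)
        + c * ((v - w) ⬝ᵥ (v - w)) := by
  have h := parallelSum_form_le (Dmat_posDef (x := x) hb hbc t) (PosDef.one.smul (hb.trans hbc))
    (v - laserCenter d b c x y t) (w - laserCenter d b c x y t)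
  rwa [sub_sub_sub_cancel_right, smul_mulVec, one_mulVec, dotProduct_smul, smul_eq_mul] at h

theorem sum_discounted_loss_add_form_le (hb : 0 < b) (hbc : b < c) (u : ℕ → Fin d → ℝ) (T : ℕ) :
    ∑ t ∈ range (T + 1), (1 - leverage (Dmat d b c x (t + 1)) (x (t + 1))) *
          (y (t + 1) - x (t + 1) ⬝ᵥ laserCenter d b c x y t) ^ 2
      + (u (T + 1) - laserCenter d b c x y (T + 1)) ⬝ᵥ
          Dmat d b c x (T + 1) *ᵥ (u (T + 1) - laserCenter d b c x y (T + 1)) ≤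
      b * (u 1 ⬝ᵥ u 1)
        + ∑ t ∈ range (T + 1), (y (t + 1) - u (t + 1) ⬝ᵥ x (t + 1)) ^ 2
        + c * ∑ t ∈ range T, (u (t + 2) - u (t + 1)) ⬝ᵥ (u (t + 2) - u (t + 1)) := by
  induction T with
  | zero =>
    have hround := laserCenter_form_succ (x := x) (y := y) hb hbc 0 (u 1)
    have hcenter : laserCenter d b c x y 0 = 0 := by rw [laserCenter, evec, mulVec_zero]
    have hstart : u 1 ⬝ᵥ parallelSum (Dmat d b c x 0) (c • 1) *ᵥ u 1 = b * (u 1 ⬝ᵥ u 1) := by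
      rw [parallelSum_Dmat_zero hb hbc, smul_mulVec, one_mulVec, dotProduct_smul, smul_eq_mul]
    simp only [hcenter, sub_zero, hstart] at hround
    simp only [zero_add, sum_range_one, range_zero, sum_empty, hcenter] at hround ⊢
    linarith
  | succ T ih =>
    have hround := laserCenter_form_succ (x := x) (y := y) hb hbc (T + 1) (u (T + 2))
    have hdrift := laserCenter_drift_form_le (x := x) (y := y) hb hbc (T + 1)
      (u (T + 2)) (u (T + 1))
    simp only [sum_range_succ] at ih ⊢
    linarith

theorem laserLoss_le_comparator_add_leverage (hb : 0 < b) (hbc : b < c) (u : ℕ → Fin d → ℝ)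
    (T : ℕ) :
    laserLoss d b c x y (T + 1) ≤
      b * (u 1 ⬝ᵥ u 1)
        + ∑ t ∈ range (T + 1), (y (t + 1) - u (t + 1) ⬝ᵥ x (t + 1)) ^ 2
        + c * ∑ t ∈ range T, (u (t + 2) - u (t + 1)) ⬝ᵥ (u (t + 2) - u (t + 1))
        + ∑ t ∈ range (T + 1), leverage (Dmat d b c x (t + 1)) (x (t + 1)) * y (t + 1) ^ 2 := by
  have hloss := Finset.sum_le_sum fun t (_ : t ∈ range (T + 1)) =>
    laser_round_loss_le (x := x) (y := y) hb hbc t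
  rw [Finset.sum_add_distrib] at hloss
  have hform := form_nonneg_of_posSemidef (Dmat_posDef (x := x) hb hbc (T + 1)).posSemidef
    (u (T + 1) - laserCenter d b c x y (T + 1))
  rw [laserLoss]
  linarith [sum_discounted_loss_add_form_le (x := x) (y := y) hb hbc u T]

theorem sum_leverage_mul_sq_le (hb : 0 < b) (hbc : b < c) {Y : ℝ} (hy : ∀ t, |y (t + 1)| ≤ Y)
    (T : ℕ) :
    ∑ t ∈ range T, leverage (Dmat d b c x (t + 1)) (x (t + 1)) * y (t + 1) ^ 2 ≤
      Y ^ 2 * (Real.log (b⁻¹ • Dmat d b c x T).det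
        + c⁻¹ * ∑ t ∈ range T, (Dmat d b c x t).trace) :=
  calc ∑ t ∈ range T, leverage (Dmat d b c x (t + 1)) (x (t + 1)) * y (t + 1) ^ 2
      ≤ ∑ t ∈ range T, leverage (Dmat d b c x (t + 1)) (x (t + 1)) * Y ^ 2 := by
        refine Finset.sum_le_sum fun t _ => mul_le_mul_of_nonneg_left ?_
          (leverage_nonneg (Dmat_posDef hb hbc _) _)
        exact sq_le_sq.2 ((hy t).trans (le_abs_self Y))
    _ = Y ^ 2 * ∑ t ∈ range T, leverage (Dmat d b c x (t + 1)) (x (t + 1)) := by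
        rw [← Finset.sum_mul, mul_comm]
    _ ≤ _ := by gcongr; exact sum_leverage_Dmat_le hb hbc T

end Laser

theorem laser_final_bound (d : ℕ) (hd : 1 ≤ d) (b c : ℝ)
    (hb : 0 < b) (hbc : b < c)
    (x : ℕ → Fin d → ℝ) (y : ℕ → ℝ) (X Y : ℝ)
    (hx : ∀ t : ℕ, x (t + 1) ⬝ᵥ x (t + 1) ≤ X ^ 2)
    (hy : ∀ t : ℕ, |y (t + 1)| ≤ Y)
    (T : ℕ) (hT : 1 ≤ T) (u : ℕ → Fin d → ℝ) :
    laserLoss d b c x y T ≤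
      b * (u 1 ⬝ᵥ u 1)
        + ∑ t ∈ Finset.range T, (y (t + 1) - u (t + 1) ⬝ᵥ x (t + 1)) ^ 2
        + Y ^ 2 * Real.log ((b⁻¹ • Dmat d b c x T).det)
        + c⁻¹ * Y ^ 2 * (Dmat d b c x 0).trace
        + c * ∑ t ∈ Finset.range (T - 1),
            (u (t + 2) - u (t + 1)) ⬝ᵥ (u (t + 2) - u (t + 1))
        + c⁻¹ * Y ^ 2 * T * d *
            max ((3 * X ^ 2 + Real.sqrt (X ^ 4 + 4 * X ^ 2 * c)) / 2) (b + X ^ 2) := by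
  have hc := hb.trans hbc
  obtain ⟨T, rfl⟩ : ∃ n, T = n + 1 := ⟨T - 1, by omega⟩
  set M := max ((3 * X ^ 2 + Real.sqrt (X ^ 4 + 4 * X ^ 2 * c)) / 2) (b + X ^ 2)
  have hbM : b + X ^ 2 ≤ M := le_max_right _ _
  have hrootM : (3 * X ^ 2 + √(X ^ 4 + 4 * X ^ 2 * c)) / 2 ≤ M := le_max_left _ _
  have hslack : 0 ≤ c⁻¹ * Y ^ 2 * d * M :=
    mul_nonneg (by positivity) (by linarith [sq_nonneg X])
  have hstep : c * M / (c + M) + X ^ 2 ≤ M := by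
    refine mul_div_add_add_le_of_le hc (sq_nonneg X) ?_
    rw [← pow_mul]
    linarith [sq_nonneg X]
  have hregret := laserLoss_le_comparator_add_leverage (x := x) (y := y) hb hbc u T
  have hleverage := sum_leverage_mul_sq_le (x := x) hb hbc hy (T + 1)
  have htrace := mul_le_mul_of_nonneg_left
    (sum_trace_Dmat_le (Dmat_succ_form_le hb hbc hx hbM hstep) T)
    (show 0 ≤ c⁻¹ * Y ^ 2 by positivity)
  rw [Nat.add_sub_cancel]
  push_cast
  linarith
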